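/- arXiv:2110.02647 — 9 statements merged into one kernel-verified Lean document; each statement's English description precedes it below -/
import Mathlib

section
/- If a probability measure π on X is absolutely continuous with respect to ρ, Q is π-integrable, and ∫ Q dπ + KL(π‖ρ) = −log ∫ e^{−Q} dρ, then π equals the Gibbs tilt π* of ρ by Q, i.e. π is the measure with density x ↦ e^{−Q(x)} / ∫ e^{−Q} dρ with respect to ρ. -/
open MeasureTheory

open Classical in
/-- The Kullback–Leibler divergence of `π` with respect to `ρ`, with value `+∞` when `π` is
not absolutely continuous with respect to `ρ` (or the log-likelihood ratio is not integrable). -/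
noncomputable def klDiv {X : Type*} [MeasurableSpace X] (π ρ : Measure X) : EReal :=
  if π ≪ ρ ∧ Integrable (llr π ρ) π
  then ((∫ x, llr π ρ x ∂π : ℝ) : EReal)
  else ⊤

/-- Uniqueness of the minimiser in the Gibbs variational principle: if a probability measure `π`
absolutely continuous w.r.t. `ρ` with `Q` `π`-integrable satisfies
`∫ Q ∂π + KL(π‖ρ) = - log ∫ exp (-Q) ∂ρ`, then `π` is the Gibbs tilt of `ρ` by `Q`,
i.e. the measure with density `x ↦ exp (-Q x) / ∫ exp (-Q) ∂ρ` with respect to `ρ`. -/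
theorem gibbs_variational_unique
    {X : Type*} [MeasurableSpace X] (ρ : Measure X) [IsProbabilityMeasure ρ]
    (Q : X → ℝ) (hQmeas : Measurable Q) (C : ℝ) (hQbdd : ∀ x, |Q x| ≤ C)
    (π : Measure X) [IsProbabilityMeasure π] (hac : π ≪ ρ) (hint : Integrable Q π)
    (heq : ((∫ x, Q x ∂π : ℝ) : EReal) + klDiv π ρ
        = ((- Real.log (∫ x, Real.exp (-Q x) ∂ρ) : ℝ) : EReal)) :
    π = ρ.tilted (fun x => -Q x) := by
  have hexp : Integrable (fun x => Real.exp (-Q x)) ρ := by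
    refine Integrable.of_bound (by fun_prop) (Real.exp C) (Filter.Eventually.of_forall fun x => ?_)
    rw [Real.norm_eq_abs, Real.abs_exp]
    exact Real.exp_le_exp.mpr (by have := neg_abs_le (Q x); have := hQbdd x; linarith)
  have hprob : IsProbabilityMeasure (ρ.tilted (fun x => -Q x)) := isProbabilityMeasure_tilted hexp
  have hllr : Integrable (llr π ρ) π := by
    by_contra h
    rw [klDiv, if_neg (fun h' => h h'.2), EReal.coe_add_top] at heq
    exact EReal.coe_ne_top _ heq.symm
  rw [klDiv, if_pos ⟨hac, hllr⟩, ← EReal.coe_add, EReal.coe_eq_coe_iff] at heq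
  have hac' : π ≪ ρ.tilted (fun x => -Q x) := hac.trans (absolutelyContinuous_tilted hexp)
  have hi := integral_llr_tilted_right hac hint.neg hexp hllr
  have hint' := integrable_llr_tilted_right hac hint.neg hllr hexp
  apply InformationTheory.klDiv_eq_zero_iff.mp
  rw [InformationTheory.klDiv_of_ac_of_integrable hac' hint']
  have h0 : ∫ x, llr π (ρ.tilted (fun x => -Q x)) x ∂π = 0 := by
    refine hi.trans ?_
    simp only [Pi.neg_apply, integral_neg]
    linarith
  simp [h0]
end

section
/- For every probability measure π absolutely continuous with respect to ρ such that q is π-integrable and KL(π‖ρ) < ∞, the three-point identity KL(π‖ρ) − KL(π_λ‖ρ) = KL(π‖π_λ) + λ (∫ q dπ_λ − ∫ q dπ) holds, where π_λ is the Gibbs tilt of ρ by λq. -/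
open MeasureTheory

/-- Three-point identity: for every probability measure `π ≪ ρ` with `q` `π`-integrable and
`KL(π‖ρ) < ∞`, one has `KL(π‖ρ) - KL(π_λ‖ρ) = KL(π‖π_λ) + λ (∫ q ∂π_λ - ∫ q ∂π)`, where
`π_λ = ρ.tilted (-λ q)` is the Gibbs tilt of `ρ` by `λ q`. -/
theorem three_point_identity
    {X : Type*} [MeasurableSpace X] (ρ : Measure X) [IsProbabilityMeasure ρ]
    (q : X → ℝ) (hqmeas : Measurable q) (C : ℝ) (hqbdd : ∀ x, |q x| ≤ C)
    (lam : ℝ) (hlam : 0 < lam)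
    (π : Measure X) [IsProbabilityMeasure π] (hac : π ≪ ρ) (hint : Integrable q π)
    (hfin : klDiv π ρ < ⊤) :
    klDiv π ρ - klDiv (ρ.tilted (fun x => -(lam * q x))) ρ
      = klDiv π (ρ.tilted (fun x => -(lam * q x)))
        + ((lam * ((∫ x, q x ∂(ρ.tilted (fun x => -(lam * q x)))) - ∫ x, q x ∂π) : ℝ) : EReal) := by
  have hkl : π ≪ ρ ∧ Integrable (llr π ρ) π := by
    by_contra h
    rw [klDiv, if_neg h] at hfin
    exact lt_irrefl _ hfin
  have hexp : Integrable (fun x => Real.exp (-(lam * q x))) ρ := by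
    refine Integrable.of_bound (C := Real.exp (lam * C)) (by fun_prop) ?_
    filter_upwards with x
    rw [Real.norm_eq_abs, Real.abs_exp, Real.exp_le_exp]
    nlinarith [(abs_le.mp (hqbdd x)).1]
  have hf : Integrable (fun x => -(lam * q x)) π := (hint.const_mul lam).neg
  have hprob : IsProbabilityMeasure (ρ.tilted (fun x => -(lam * q x))) :=
    isProbabilityMeasure_tilted hexp
  have hac1 : ρ.tilted (fun x => -(lam * q x)) ≪ ρ := tilted_absolutelyContinuous _ _
  have hac2 : π ≪ ρ.tilted (fun x => -(lam * q x)) :=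
    hac.trans (absolutelyContinuous_tilted hexp)
  have hllr1 : llr (ρ.tilted (fun x => -(lam * q x))) ρ =ᵐ[ρ.tilted (fun x => -(lam * q x))]
      fun x => -(lam * q x) - Real.log (∫ z, Real.exp (-(lam * q z)) ∂ρ) := by
    filter_upwards [hac1.ae_le (llr_tilted_left (Measure.AbsolutelyContinuous.refl ρ) hexp
      (by fun_prop)), hac1.ae_le (llr_self ρ)] with x hx hx'
    rw [hx, hx']
    simp
  have hq1 : Integrable q (ρ.tilted (fun x => -(lam * q x))) :=
    Integrable.of_bound (C := C) (by fun_prop) (Filter.Eventually.of_forall hqbdd)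
  have hf1 : Integrable (fun x => -(lam * q x)) (ρ.tilted (fun x => -(lam * q x))) :=
    (hq1.const_mul lam).neg
  have hi1 : Integrable (llr (ρ.tilted (fun x => -(lam * q x))) ρ)
      (ρ.tilted (fun x => -(lam * q x))) :=
    (integrable_congr hllr1).mpr (hf1.sub (integrable_const _))
  have hi2 := integrable_llr_tilted_right hac hf hkl.2 hexp
  have e1 : ∫ x, llr (ρ.tilted (fun x => -(lam * q x))) ρ x ∂(ρ.tilted (fun x => -(lam * q x)))
      = -(lam * ∫ x, q x ∂(ρ.tilted (fun x => -(lam * q x))))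
        - Real.log (∫ z, Real.exp (-(lam * q z)) ∂ρ) := by
    rw [integral_congr_ae hllr1, integral_sub hf1 (integrable_const _), integral_neg,
      integral_const_mul]
    simp
  have e2 := integral_llr_tilted_right hac hf hexp hkl.2
  rw [integral_neg, integral_const_mul] at e2
  rw [klDiv, if_pos hkl, klDiv, if_pos ⟨hac1, hi1⟩, klDiv, if_pos ⟨hac2, hi2⟩, e1, e2,
    ← EReal.coe_sub, ← EReal.coe_add]
  congr 1
  ring
end

section
/- If λ > 0 and q is not ρ-almost-everywhere equal to a constant, then the Gibbs tilt π_λ of ρ by λq strictly decreases the expected objective: ∫ q dπ_λ < ∫ q dρ. Consequently there exists Δ > 0 (namely Δ = ∫ q dρ − ∫ q dπ_λ) such that ∫ q dπ_λ ≤ ∫ q dρ − Δ. -/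
open MeasureTheory

/-- Strict decrease of the expected objective under Gibbs tilting: if `λ > 0` and `q` is not
`ρ`-almost-everywhere constant, then the Gibbs tilt `π_λ = ρ.tilted (-λ q)` satisfies
`∫ q ∂π_λ < ∫ q ∂ρ`; consequently there exists `Δ > 0` such that
`∫ q ∂π_λ ≤ ∫ q ∂ρ - Δ`. -/
theorem gibbs_tilt_strictly_decreases_objective
    {X : Type*} [MeasurableSpace X] (ρ : Measure X) [IsProbabilityMeasure ρ]
    (q : X → ℝ) (hqmeas : Measurable q) (C : ℝ) (hqbdd : ∀ x, |q x| ≤ C)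
    (lam : ℝ) (hlam : 0 < lam)
    (hnonconst : ¬ ∃ c : ℝ, ∀ᵐ x ∂ρ, q x = c) :
    (∫ x, q x ∂(ρ.tilted (fun x => -(lam * q x)))) < ∫ x, q x ∂ρ ∧
      ∃ Δ : ℝ, 0 < Δ ∧
        (∫ x, q x ∂(ρ.tilted (fun x => -(lam * q x)))) ≤ (∫ x, q x ∂ρ) - Δ := by
  have key : (∫ x, q x ∂(ρ.tilted (fun x => -(lam * q x)))) < ∫ x, q x ∂ρ := by
    set m : ℝ := ∫ x, q x ∂ρ with hm
    have hq : Integrable q ρ :=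
      Integrable.of_bound hqmeas.aestronglyMeasurable C
        (Filter.Eventually.of_forall fun x => by simpa using hqbdd x)
    have hemeas : Measurable (fun x => Real.exp (-(lam * q x))) := by fun_prop
    have heb : ∀ x, ‖Real.exp (-(lam * q x))‖ ≤ Real.exp (lam * C) := by
      intro x
      rw [Real.norm_eq_abs, abs_of_pos (Real.exp_pos _)]
      apply Real.exp_le_exp.mpr
      have := (abs_le.mp (hqbdd x)).1
      nlinarith
    have he : Integrable (fun x => Real.exp (-(lam * q x))) ρ :=
      Integrable.of_bound hemeas.aestronglyMeasurable _ (Filter.Eventually.of_forall heb)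
    have hqe : Integrable (fun x => Real.exp (-(lam * q x)) * q x) ρ :=
      hq.bdd_mul hemeas.aestronglyMeasurable (Filter.Eventually.of_forall heb)
    have hZ : 0 < ∫ x, Real.exp (-(lam * q x)) ∂ρ := integral_exp_pos he
    let g : X → ℝ := fun x =>
      (Real.exp (-(lam * m)) * q x - Real.exp (-(lam * m)) * m)
        - (Real.exp (-(lam * q x)) * q x - Real.exp (-(lam * q x)) * m)
    have hg1 : Integrable g ρ :=
      ((hq.const_mul _).sub (integrable_const _)).sub (hqe.sub (he.mul_const _))
    have hgi : ∫ x, g x ∂ρ = - ((∫ x, Real.exp (-(lam * q x)) * q x ∂ρ)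
        - (∫ x, Real.exp (-(lam * q x)) ∂ρ) * m) := by
      have i1 : Integrable (fun x => Real.exp (-(lam * m)) * q x - Real.exp (-(lam * m)) * m) ρ :=
        (hq.const_mul _).sub (integrable_const _)
      have i2 : Integrable
          (fun x => Real.exp (-(lam * q x)) * q x - Real.exp (-(lam * q x)) * m) ρ :=
        hqe.sub (he.mul_const _)
      simp only [g]
      rw [integral_sub i1 i2,
        integral_sub (hq.const_mul _) (integrable_const _),
        integral_sub hqe (he.mul_const _), integral_const_mul, integral_mul_const, ← hm]
      simp
      exact integral_mul_const _ _
    have hgpos : ∀ x, q x ≠ m → 0 < g x := by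
      intro x hx
      have hgx : g x = (q x - m) * (Real.exp (-(lam * m)) - Real.exp (-(lam * q x))) := by
        simp only [g]; ring
      rw [hgx]
      rcases lt_or_gt_of_ne hx with h | h
      · have : Real.exp (-(lam * m)) < Real.exp (-(lam * q x)) :=
          Real.exp_lt_exp.mpr (by nlinarith)
        exact mul_pos_of_neg_of_neg (by linarith) (by linarith)
      · have : Real.exp (-(lam * q x)) < Real.exp (-(lam * m)) :=
          Real.exp_lt_exp.mpr (by nlinarith)
        exact mul_pos (by linarith) (by linarith)
    have hg0 : ∀ x, 0 ≤ g x := by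
      intro x
      by_cases hx : q x = m
      · simp [g, hx]
      · exact (hgpos x hx).le
    have hgne : ∫ x, g x ∂ρ ≠ 0 := by
      intro h0
      rw [integral_eq_zero_iff_of_nonneg hg0 hg1] at h0
      apply hnonconst
      refine ⟨m, ?_⟩
      filter_upwards [h0] with x hx
      by_contra hne
      exact (hgpos x hne).ne' hx
    have hgp : 0 < ∫ x, g x ∂ρ := lt_of_le_of_ne (integral_nonneg hg0) hgne.symm
    rw [hgi] at hgp
    rw [integral_tilted]
    have : ∀ x, (Real.exp (-(lam * q x)) / ∫ x, Real.exp (-(lam * q x)) ∂ρ) • q x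
        = (Real.exp (-(lam * q x)) * q x) / ∫ x, Real.exp (-(lam * q x)) ∂ρ := by
      intro x; rw [smul_eq_mul]; ring
    simp_rw [this]
    rw [integral_div, div_lt_iff₀ hZ]
    linarith
  exact ⟨key, _, sub_pos.mpr key, by linarith⟩
end

section
/- The function π ↦ λ Σ_x π(x) q(x) + α Σ_x π(x) log(π(x)/ρ₁(x)) + (1−α) Σ_x π(x) log(π(x)/ρ₂(x)), defined on positive PMFs π on X, attains its minimum uniquely at the PMF π*(x) = ρ₁(x)^α · ρ₂(x)^{1−α} · e^{−λ q(x)} / Z, where Z = Σ_y ρ₁(y)^α ρ₂(y)^{1−α} e^{−λ q(y)}. -/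
open Finset

/-- The augmented entropic optimisation objective
`π ↦ λ Σ π q + α Σ π log(π/ρ₁) + (1-α) Σ π log(π/ρ₂)`, over positive PMFs on a nonempty finite
type, attains its minimum uniquely at `π*(x) = ρ₁(x)^α ρ₂(x)^(1-α) e^(-λ q x) / Z`. -/
theorem augmented_entropic_optimisation_solution
    {X : Type*} [Fintype X] [Nonempty X]
    (ρ₁ ρ₂ : X → ℝ) (hρ₁pos : ∀ x, 0 < ρ₁ x) (hρ₁sum : ∑ x, ρ₁ x = 1)
    (hρ₂pos : ∀ x, 0 < ρ₂ x) (hρ₂sum : ∑ x, ρ₂ x = 1)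
    (q : X → ℝ) (lam α : ℝ) (hlam : 0 < lam) (hα₀ : 0 < α) (hα₁ : α < 1)
    (F : (X → ℝ) → ℝ)
    (hF : ∀ π : X → ℝ, F π =
      lam * ∑ x, π x * q x + α * ∑ x, π x * Real.log (π x / ρ₁ x)
        + (1 - α) * ∑ x, π x * Real.log (π x / ρ₂ x))
    (Z : ℝ) (hZ : Z = ∑ y, ρ₁ y ^ α * ρ₂ y ^ (1 - α) * Real.exp (-(lam * q y)))
    (πstar : X → ℝ)
    (hπstar : ∀ x, πstar x = ρ₁ x ^ α * ρ₂ x ^ (1 - α) * Real.exp (-(lam * q x)) / Z) :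
    ((∀ x, 0 < πstar x) ∧ ∑ x, πstar x = 1) ∧
      ∀ π : X → ℝ, (∀ x, 0 < π x) → ∑ x, π x = 1 →
        F πstar ≤ F π ∧ (F π = F πstar → π = πstar) := by
  have hnum : ∀ x, 0 < ρ₁ x ^ α * ρ₂ x ^ (1 - α) * Real.exp (-(lam * q x)) := fun x =>
    mul_pos (mul_pos (Real.rpow_pos_of_pos (hρ₁pos x) _) (Real.rpow_pos_of_pos (hρ₂pos x) _))
      (Real.exp_pos _)
  have hZpos : 0 < Z := by
    rw [hZ]
    exact Finset.sum_pos (fun x _ => hnum x) Finset.univ_nonempty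
  have hpos : ∀ x, 0 < πstar x := fun x => by
    rw [hπstar]
    exact div_pos (hnum x) hZpos
  have hsum : ∑ x, πstar x = 1 := by
    simp only [hπstar]
    rw [← Finset.sum_div, ← hZ, div_self hZpos.ne']
  have hlog : ∀ x, Real.log (πstar x) =
      α * Real.log (ρ₁ x) + (1 - α) * Real.log (ρ₂ x) - lam * q x - Real.log Z := fun x => by
    have h1 := Real.rpow_pos_of_pos (hρ₁pos x) α
    have h2 := Real.rpow_pos_of_pos (hρ₂pos x) (1 - α)
    rw [hπstar, Real.log_div (hnum x).ne' hZpos.ne',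
      Real.log_mul (mul_pos h1 h2).ne' (Real.exp_pos _).ne', Real.log_mul h1.ne' h2.ne',
      Real.log_rpow (hρ₁pos x), Real.log_rpow (hρ₂pos x), Real.log_exp]
    ring
  have key : ∀ π : X → ℝ, (∀ x, 0 < π x) → ∑ x, π x = 1 →
      F π = ∑ x, (π x * (Real.log (π x) - Real.log (πstar x)) - π x + πstar x)
        - Real.log Z := by
    intro π hp hs
    have e : ∑ x, (π x * (Real.log (π x) - Real.log (πstar x)) - π x + πstar x) =
        ∑ x, (lam * (π x * q x) + α * (π x * Real.log (π x / ρ₁ x))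
          + (1 - α) * (π x * Real.log (π x / ρ₂ x)) + Real.log Z * π x - π x + πstar x) := by
      refine Finset.sum_congr rfl fun x _ => ?_
      rw [hlog, Real.log_div (hp x).ne' (hρ₁pos x).ne', Real.log_div (hp x).ne' (hρ₂pos x).ne']
      ring
    rw [e, hF]
    simp only [Finset.sum_add_distrib, Finset.sum_sub_distrib, ← Finset.mul_sum, hs, hsum]
    ring
  have hstar : F πstar = - Real.log Z := by
    rw [key πstar hpos hsum]
    simp
  refine ⟨⟨hpos, hsum⟩, fun π hp hs => ?_⟩
  have hlt : ∀ x, π x ≠ πstar x →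
      0 < π x * (Real.log (π x) - Real.log (πstar x)) - π x + πstar x := by
    intro x hne
    have h := Real.log_lt_sub_one_of_pos (div_pos (hpos x) (hp x))
      (fun h => hne ((div_eq_one_iff_eq (hp x).ne').1 h).symm)
    rw [Real.log_div (hpos x).ne' (hp x).ne'] at h
    have h2 := mul_lt_mul_of_pos_left h (hp x)
    have h3 : π x * (πstar x / π x - 1) = πstar x - π x := by
      have := (hp x).ne'
      field_simp
    rw [h3] at h2
    linarith
  have hnn : ∀ x, 0 ≤ π x * (Real.log (π x) - Real.log (πstar x)) - π x + πstar x := by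
    intro x
    by_cases h : π x = πstar x
    · rw [h]
      simp
    · exact (hlt x h).le
  rw [hstar, key π hp hs]
  refine ⟨?_, fun h => ?_⟩
  · have := Finset.sum_nonneg (s := Finset.univ) fun x _ => hnn x
    linarith
  · have h0 : ∑ x, (π x * (Real.log (π x) - Real.log (πstar x)) - π x + πstar x) = 0 := by
      linarith
    rw [Finset.sum_eq_zero_iff_of_nonneg fun x _ => hnn x] at h0
    funext x
    by_contra hne
    exact (hlt x hne).ne' (h0 x (Finset.mem_univ x))
end

section
/- Let the sequence of PMFs (π_g) on X be defined by π_0 a given positive PMF and π_{g+1}(x) = π_g(x)^α e^{−λ q(x)} / Σ_y π_g(y)^α e^{−λ q(y)}. Then for every g ≥ 0 and x ∈ X, π_g(x) = π_0(x)^{α^g} · exp(−λ · (1−α^g)/(1−α) · q(x)) / Z_g, where Z_g = Σ_y π_0(y)^{α^g} exp(−λ (1−α^g)/(1−α) q(y)). -/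
open Finset

/-- Explicit form of the belief-update recursion `π_{g+1} ∝ π_g^α e^(-λ q)`: the iterates are
`π_g(x) = π_0(x)^(α^g) exp(-λ (1-α^g)/(1-α) q(x)) / Z_g`. -/
theorem belief_update_explicit_form
    {X : Type*} [Fintype X] [Nonempty X]
    (q : X → ℝ) (lam α : ℝ) (hlam : 0 < lam) (hα₀ : 0 < α) (hα₁ : α < 1)
    (π : ℕ → X → ℝ)
    (hπ₀pos : ∀ x, 0 < π 0 x) (hπ₀sum : ∑ x, π 0 x = 1)
    (hrec : ∀ g x, π (g + 1) x =
      π g x ^ α * Real.exp (-(lam * q x)) / ∑ y, π g y ^ α * Real.exp (-(lam * q y))) :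
    ∀ g x, π g x =
      π 0 x ^ (α ^ g) * Real.exp (-(lam * ((1 - α ^ g) / (1 - α)) * q x)) /
        ∑ y, π 0 y ^ (α ^ g) * Real.exp (-(lam * ((1 - α ^ g) / (1 - α)) * q y)) := by
  intro g
  induction g with
  | zero => intro x; simp [hπ₀sum]
  | succ g ih =>
    intro x
    have h1 : (1 - α) ≠ 0 := by linarith
    have hZ : 0 < ∑ y, π 0 y ^ (α ^ g) * Real.exp (-(lam * ((1 - α ^ g) / (1 - α)) * q y)) :=
      Finset.sum_pos (fun y _ => mul_pos (Real.rpow_pos_of_pos (hπ₀pos y) _) (Real.exp_pos _))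
        Finset.univ_nonempty
    set Z := ∑ y, π 0 y ^ (α ^ g) * Real.exp (-(lam * ((1 - α ^ g) / (1 - α)) * q y)) with hZdef
    have key : ∀ y, π g y ^ α * Real.exp (-(lam * q y)) =
        (π 0 y ^ (α ^ (g + 1)) *
          Real.exp (-(lam * ((1 - α ^ (g + 1)) / (1 - α)) * q y))) / Z ^ α := by
      intro y
      have hp := Real.rpow_pos_of_pos (hπ₀pos y) (α ^ g)
      rw [ih y, Real.div_rpow (mul_pos hp (Real.exp_pos _)).le hZ.le,
        Real.mul_rpow hp.le (Real.exp_pos _).le, ← Real.rpow_mul (hπ₀pos y).le,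
        ← Real.exp_mul, ← pow_succ, div_mul_eq_mul_div, mul_assoc, ← Real.exp_add]
      congr 3
      field_simp
      ring
    rw [hrec g x]
    simp only [key]
    rw [← Finset.sum_div, div_div_div_cancel_right₀ (Real.rpow_pos_of_pos hZ α).ne']
end

section
/- Let (π_g) be the sequence of PMFs on X defined by a positive PMF π_0 and π_{g+1}(x) = π_g(x)^α e^{−λ q(x)} / Σ_y π_g(y)^α e^{−λ q(y)} with 0 < α < 1. Then for every x ∈ X, π_g(x) converges as g → ∞ to π_∞(x) = exp(−(λ/(1−α)) q(x)) / Σ_y exp(−(λ/(1−α)) q(y)). -/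
open Finset Filter

/-- Convergence of the belief-update recursion `π_{g+1} ∝ π_g^α e^(-λ q)`: for every `x`,
`π_g(x)` converges to `exp(-(λ/(1-α)) q(x)) / Σ_y exp(-(λ/(1-α)) q(y))` as `g → ∞`. -/
theorem belief_update_limit
    {X : Type*} [Fintype X] [Nonempty X]
    (q : X → ℝ) (lam α : ℝ) (hlam : 0 < lam) (hα₀ : 0 < α) (hα₁ : α < 1)
    (π : ℕ → X → ℝ)
    (hπ₀pos : ∀ x, 0 < π 0 x) (hπ₀sum : ∑ x, π 0 x = 1)
    (hrec : ∀ g x, π (g + 1) x =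
      π g x ^ α * Real.exp (-(lam * q x)) / ∑ y, π g y ^ α * Real.exp (-(lam * q y))) :
    ∀ x, Tendsto (fun g => π g x) atTop
      (nhds (Real.exp (-(lam / (1 - α)) * q x) / ∑ y, Real.exp (-(lam / (1 - α)) * q y))) := by
  have h1 : (1 - α) ≠ 0 := by linarith
  set c : ℝ := -(lam / (1 - α)) with hc
  have hcα : α * c - lam = c := by
    rw [hc]; field_simp; ring
  set u : ℕ → X → ℝ := fun g x => c * q x + α ^ g * (Real.log (π 0 x) - c * q x) with hu
  have hS : ∀ v : X → ℝ, 0 < ∑ y, Real.exp (v y) := fun v =>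
    Finset.sum_pos (fun y _ => Real.exp_pos _) Finset.univ_nonempty
  have key : ∀ g x, π g x = Real.exp (u g x) / ∑ y, Real.exp (u g y) := by
    intro g
    induction g with
    | zero =>
      intro x
      have h : ∀ y, Real.exp (u 0 y) = π 0 y := by
        intro y
        simp [hu, Real.exp_log (hπ₀pos y)]
      simp only [h, hπ₀sum, div_one]
    | succ g ih =>
      intro x
      have hSg := hS (u g)
      set S := ∑ y, Real.exp (u g y) with hSdef
      have hpos : 0 < S ^ α := Real.rpow_pos_of_pos hSg α
      have h : ∀ y, π g y ^ α * Real.exp (-(lam * q y)) = Real.exp (u (g + 1) y) / S ^ α := by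
        intro y
        rw [ih y, Real.div_rpow (Real.exp_pos _).le hSg.le, ← Real.exp_mul, div_mul_eq_mul_div,
          ← Real.exp_add]
        congr 2
        simp only [hu, pow_succ]
        linear_combination q y * hcα
      rw [hrec]
      simp only [h]
      rw [← Finset.sum_div, div_div_div_cancel_right₀ hpos.ne']
  have hlim : ∀ x, Tendsto (fun g => Real.exp (u g x)) atTop (nhds (Real.exp (c * q x))) := by
    intro x
    have h0 := (tendsto_pow_atTop_nhds_zero_of_lt_one hα₀.le hα₁).mul_const
      (Real.log (π 0 x) - c * q x)
    have h2 := h0.const_add (c * q x)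
    rw [zero_mul, add_zero] at h2
    exact (Real.continuous_exp.tendsto _).comp h2
  intro x
  simp only [key]
  exact (hlim x).div (tendsto_finsetSum _ fun y _ => hlim y) (hS fun y => c * q y).ne'
end

section
/- Define backward values V_N(s) = λ r_N(s) and, for n < N, V_n(s) = inf over PMFs π on A of Σ_a π(a)·[λ r_n(s,a) + α log(π(a)/ρ_n(s)(a)) + (1−α) log(|A|·π(a)) + V_{n+1}(f_n(s,a))]. Then for every n ≤ N and state s, V_n(s) equals the infimum, over all policy sequences (π_n, …, π_{N−1}) with each π_k : S → PMF(A), of the expectation—under the stochastic trajectory started at s where a_k ∼ π_k(s_k) and s_{k+1} = f_k(s_k, a_k)—of λ r_N(s_N) + Σ_{k=n}^{N−1} [λ r_k(s_k,a_k) + α log(π_k(s_k)(a_k)/ρ_k(s_k)(a_k)) + (1−α) log(|A|·π_k(s_k)(a_k))]. -/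
open Finset

/-- The probability of the action sequence `as` under the (time-indexed) stochastic policy `p`,
along the deterministic rollout of the dynamics `f` started at time `n` in state `s`. -/
def pathProb {S A : Type*} (p : ℕ → S → A → ℝ) (f : ℕ → S → A → S) :
    ℕ → S → List A → ℝ
  | _, _, [] => 1
  | n, s, a :: as => p n s a * pathProb p f (n + 1) (f n s a) as

/-- The accumulated cost of the action sequence `as` for running costs `c` and terminal cost `cT`,
along the deterministic rollout of the dynamics `f` started at time `n` in state `s`. -/
def totalCost {S A : Type*} (f : ℕ → S → A → S) (c : ℕ → S → A → ℝ) (cT : S → ℝ) :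
    ℕ → S → List A → ℝ
  | _, s, [] => cT s
  | n, s, a :: as => c n s a + totalCost f c cT (n + 1) (f n s a) as

theorem sum_pathProb_aux {S A : Type*} [Fintype A] (P : ℕ → S → A → ℝ) (f : ℕ → S → A → S)
    (hP : ∀ k t, ∑ a, P k t a = 1) (m : ℕ) : ∀ n s,
    ∑ as : Fin m → A, pathProb P f n s (List.ofFn as) = 1 := by
  induction m with
  | zero => intro n s; simp [pathProb]
  | succ m ih =>
    intro n s
    rw [← (Fin.consEquiv (fun _ : Fin (m + 1) => A)).sum_comp, Fintype.sum_prod_type]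
    simp only [Fin.consEquiv_apply, List.ofFn_succ, Fin.cons_zero, Fin.cons_succ, pathProb]
    simp only [← Finset.mul_sum, ih, mul_one, hP]

theorem sum_cost_succ_aux {S A : Type*} [Fintype A] (P : ℕ → S → A → ℝ) (f : ℕ → S → A → S)
    (c : ℕ → S → A → ℝ) (cT : S → ℝ)
    (hP : ∀ k t, ∑ a, P k t a = 1) (m n : ℕ) (s : S) :
    ∑ as : Fin (m + 1) → A, pathProb P f n s (List.ofFn as) * totalCost f c cT n s (List.ofFn as)
    = ∑ a, P n s a * (c n s a + ∑ as : Fin m → A, pathProb P f (n + 1) (f n s a) (List.ofFn as) *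
        totalCost f c cT (n + 1) (f n s a) (List.ofFn as)) := by
  rw [← (Fin.consEquiv (fun _ : Fin (m + 1) => A)).sum_comp, Fintype.sum_prod_type]
  simp only [Fin.consEquiv_apply, List.ofFn_succ, Fin.cons_zero, Fin.cons_succ, pathProb, totalCost]
  refine Finset.sum_congr rfl fun a _ => ?_
  simp only [mul_assoc, ← Finset.mul_sum, mul_add, Finset.sum_add_distrib, ← Finset.sum_mul]
  rw [sum_pathProb_aux P f hP, one_mul]

theorem exists_min_aux {A : Type*} [Fintype A] [Nonempty A] (α : ℝ) (ρ : A → ℝ)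
    (hρ : ∀ a, 0 < ρ a) (q v : A → ℝ) :
    ∃ π : A → ℝ, ((∀ a, 0 ≤ π a) ∧ ∑ a, π a = 1) ∧ ∀ π' : A → ℝ, (∀ a, 0 ≤ π' a) →
      ∑ a, π' a = 1 →
      ∑ a, π a * (q a + α * Real.log (π a / ρ a)
          + (1 - α) * Real.log ((Fintype.card A : ℝ) * π a) + v a) ≤
      ∑ a, π' a * (q a + α * Real.log (π' a / ρ a)
          + (1 - α) * Real.log ((Fintype.card A : ℝ) * π' a) + v a) := by
  classical
  have hc : (Fintype.card A : ℝ) ≠ 0 := by exact_mod_cast Fintype.card_ne_zero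
  have key : ∀ π : A → ℝ,
      ∑ a, π a * (q a + α * Real.log (π a / ρ a)
          + (1 - α) * Real.log ((Fintype.card A : ℝ) * π a) + v a) =
      ∑ a, (π a * Real.log (π a) + π a * (q a - α * Real.log (ρ a)
          + (1 - α) * Real.log (Fintype.card A : ℝ) + v a)) := by
    intro π
    refine Finset.sum_congr rfl fun a _ => ?_
    by_cases h : π a = 0
    · simp [h]
    · rw [Real.log_div h (hρ a).ne', Real.log_mul hc h]; ring
  have hcont : Continuous fun π : A → ℝ =>
      ∑ a, (π a * Real.log (π a) + π a * (q a - α * Real.log (ρ a)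
          + (1 - α) * Real.log (Fintype.card A : ℝ) + v a)) := by
    refine continuous_finset_sum _ fun a _ => ?_
    exact (Real.continuous_mul_log.comp (continuous_apply a)).add
      ((continuous_apply a).mul continuous_const)
  obtain ⟨π, hπ, hmin⟩ := (isCompact_stdSimplex ℝ A).exists_isMinOn
    ⟨_, single_mem_stdSimplex ℝ (Classical.arbitrary A)⟩ hcont.continuousOn
  refine ⟨π, ⟨hπ.1, hπ.2⟩, fun π' h0 h1 => ?_⟩
  rw [key, key]
  exact hmin (show π' ∈ stdSimplex ℝ A from ⟨h0, h1⟩)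

/-- The paper's Lemma 1: the entropic Bellman backward recursion computes the infimum, over all
policy sequences, of the expected entropy-regularised trajectory cost of the stochastic rollout
`a_k ∼ π_k(s_k)`, `s_{k+1} = f_k(s_k, a_k)` started at `s`. -/
theorem entropic_bellman_recursion
    {S : Type*} {A : Type*} [Fintype A] [Nonempty A]
    (N : ℕ) (hN : 1 ≤ N)
    (f : ℕ → S → A → S) (r : ℕ → S → A → ℝ) (rT : S → ℝ)
    (lam α : ℝ) (hlam : 0 < lam) (hα₀ : 0 < α) (hα₁ : α < 1)
    (ρ : ℕ → S → A → ℝ) (hρpos : ∀ n s a, 0 < ρ n s a) (hρsum : ∀ n s, ∑ a, ρ n s a = 1)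
    (V : ℕ → S → ℝ)
    (hVN : ∀ s, V N s = lam * rT s)
    (hV : ∀ n, n < N → ∀ s, V n s =
      sInf {v : ℝ | ∃ π : A → ℝ, (∀ a, 0 ≤ π a) ∧ (∑ a, π a = 1) ∧
        v = ∑ a, π a * (lam * r n s a + α * Real.log (π a / ρ n s a)
          + (1 - α) * Real.log ((Fintype.card A : ℝ) * π a) + V (n + 1) (f n s a))}) :
    ∀ n, n ≤ N → ∀ s, V n s =
      sInf {v : ℝ | ∃ P : ℕ → S → A → ℝ,
        (∀ k t, (∀ a, 0 ≤ P k t a) ∧ (∑ a, P k t a = 1)) ∧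
        v = ∑ as : Fin (N - n) → A,
          pathProb P f n s (List.ofFn as) *
            totalCost f
              (fun k t a => lam * r k t a + α * Real.log (P k t a / ρ k t a)
                + (1 - α) * Real.log ((Fintype.card A : ℝ) * P k t a))
              (fun t => lam * rT t) n s (List.ofFn as)} := by
  choose Q hQ hQmin using fun n s => exists_min_aux α (ρ n s) (hρpos n s)
    (fun a => lam * r n s a) (fun a => V (n + 1) (f n s a))
  have hVQ : ∀ n, n < N → ∀ s, V n s = ∑ a, Q n s a * (lam * r n s a
      + α * Real.log (Q n s a / ρ n s a)
      + (1 - α) * Real.log ((Fintype.card A : ℝ) * Q n s a) + V (n + 1) (f n s a)) := by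
    intro n hn s
    rw [hV n hn s]
    refine IsLeast.csInf_eq ⟨⟨Q n s, (hQ n s).1, (hQ n s).2, rfl⟩, ?_⟩
    rintro v ⟨π, h0, h1, rfl⟩
    exact hQmin n s π h0 h1
  have hlow : ∀ P : ℕ → S → A → ℝ, (∀ k t, (∀ a, 0 ≤ P k t a) ∧ (∑ a, P k t a = 1)) →
      ∀ m n, n + m = N → ∀ s, V n s ≤ ∑ as : Fin m → A,
          pathProb P f n s (List.ofFn as) *
            totalCost f
              (fun k t a => lam * r k t a + α * Real.log (P k t a / ρ k t a)
                + (1 - α) * Real.log ((Fintype.card A : ℝ) * P k t a))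
              (fun t => lam * rT t) n s (List.ofFn as) := by
    intro P hP m
    induction m with
    | zero =>
      intro n hn s
      obtain rfl : n = N := by omega
      simp [pathProb, totalCost, hVN]
    | succ m ih =>
      intro n hn s
      rw [sum_cost_succ_aux P f _ _ (fun k t => (hP k t).2), hVQ n (by omega) s]
      refine (hQmin n s (P n s) (hP n s).1 (hP n s).2).trans ?_
      refine Finset.sum_le_sum fun a _ => mul_le_mul_of_nonneg_left ?_ ((hP n s).1 a)
      exact add_le_add le_rfl (ih (n + 1) (by omega) (f n s a))
  have heq : ∀ m n, n + m = N → ∀ s, V n s = ∑ as : Fin m → A,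
          pathProb Q f n s (List.ofFn as) *
            totalCost f
              (fun k t a => lam * r k t a + α * Real.log (Q k t a / ρ k t a)
                + (1 - α) * Real.log ((Fintype.card A : ℝ) * Q k t a))
              (fun t => lam * rT t) n s (List.ofFn as) := by
    intro m
    induction m with
    | zero =>
      intro n hn s
      obtain rfl : n = N := by omega
      simp [pathProb, totalCost, hVN]
    | succ m ih =>
      intro n hn s
      rw [sum_cost_succ_aux Q f _ _ (fun k t => (hQ k t).2), hVQ n (by omega) s]
      refine Finset.sum_congr rfl fun a _ => ?_
      rw [ih (n + 1) (by omega) (f n s a)]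
  intro n hn s
  symm
  refine IsLeast.csInf_eq ⟨⟨Q, hQ, heq (N - n) n (by omega) s⟩, ?_⟩
  rintro v ⟨P, hP, rfl⟩
  exact hlow P hP (N - n) n (by omega) s
end

section
/- Define Z_N(s) = exp(−λ r_N(s)) and, backward for n < N, Z_n(s) = Σ_a ρ_n(s)(a)^α · e^{−λ r_n(s,a)} · Z_{n+1}(f_n(s,a)). Then for every n and state s, Z_n(s) equals the expectation, over action sequences (a_n, …, a_{N−1}) drawn sequentially as a_k ∼ ρ_k(s_k) along the deterministic rollout s_{k+1} = f_k(s_k, a_k) started at s_n = s, of exp(−R_n), where R_n = λ r_N(s_N) + Σ_{k=n}^{N−1} [λ r_k(s_k, a_k) + (1−α) log ρ_k(s_k)(a_k)]. -/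
open Finset

/-- The path-integral formula of the paper's Corollary 1: the desirability function `Z_n`,
defined by the backward recursion `Z_N(s) = exp(-λ r_N(s))`,
`Z_n(s) = Σ_a ρ_n(s)(a)^α e^(-λ r_n(s,a)) Z_{n+1}(f_n(s,a))`, equals the expectation over
action sequences drawn from the prior policies `ρ` along the deterministic rollout of
`exp (-R_n)`, where `R_n` accumulates `λ r_k(s_k,a_k) + (1-α) log ρ_k(s_k)(a_k)` plus the
terminal cost `λ r_N(s_N)`. -/
theorem desirability_path_integral
    {S : Type*} {A : Type*} [Fintype A] [Nonempty A]
    (N : ℕ) (hN : 1 ≤ N)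
    (f : ℕ → S → A → S) (r : ℕ → S → A → ℝ) (rT : S → ℝ)
    (lam α : ℝ) (hlam : 0 < lam) (hα₀ : 0 < α) (hα₁ : α < 1)
    (ρ : ℕ → S → A → ℝ) (hρpos : ∀ n s a, 0 < ρ n s a) (hρsum : ∀ n s, ∑ a, ρ n s a = 1)
    (Z : ℕ → S → ℝ)
    (hZN : ∀ s, Z N s = Real.exp (-(lam * rT s)))
    (hZ : ∀ n, n < N → ∀ s, Z n s =
      ∑ a, ρ n s a ^ α * Real.exp (-(lam * r n s a)) * Z (n + 1) (f n s a)) :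
    ∀ n, n ≤ N → ∀ s, Z n s =
      ∑ as : Fin (N - n) → A,
        pathProb ρ f n s (List.ofFn as) *
          Real.exp (-(totalCost f
            (fun k t a => lam * r k t a + (1 - α) * Real.log (ρ k t a))
            (fun t => lam * rT t) n s (List.ofFn as))) := by
  have key : ∀ m n, n + m = N → ∀ s, Z n s =
      ∑ as : Fin m → A,
        pathProb ρ f n s (List.ofFn as) *
          Real.exp (-(totalCost f
            (fun k t a => lam * r k t a + (1 - α) * Real.log (ρ k t a))
            (fun t => lam * rT t) n s (List.ofFn as))) := by
    intro m
    induction m with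
    | zero =>
      intro n hn s
      have hn' : n = N := by omega
      subst hn'
      simp [pathProb, totalCost, hZN]
    | succ m ih =>
      intro n hn s
      rw [hZ n (by omega) s, ← (Fin.consEquiv (fun _ : Fin (m + 1) => A)).sum_comp,
        Fintype.sum_prod_type]
      refine Finset.sum_congr rfl fun a _ => ?_
      rw [ih (n + 1) (by omega) (f n s a), Finset.mul_sum]
      refine Finset.sum_congr rfl fun as _ => ?_
      have h1 : ρ n s a ^ α = ρ n s a * Real.exp (-((1 - α) * Real.log (ρ n s a))) := by
        rw [Real.rpow_def_of_pos (hρpos n s a)]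
        nth_rewrite 2 [← Real.exp_log (hρpos n s a)]
        rw [← Real.exp_add]
        congr 1
        ring
      have h2 : List.ofFn ((Fin.consEquiv (fun _ : Fin (m + 1) => A)) (a, as))
          = a :: List.ofFn as := List.ofFn_cons a as
      rw [h2]
      simp only [pathProb, totalCost]
      rw [h1, neg_add, neg_add, Real.exp_add, Real.exp_add]
      ring
  intro n hn s
  exact key (N - n) n (by omega) s
end

section
/- Let π'_n be the posterior policies π'_n(s)(a) = ρ_n(s)(a) e^{−(λ r_n(s,a)+(1−α) log ρ_n(s)(a))} Z_{n+1}(f_n(s,a)) / Z_n(s), with Z_n given by the backward recursion Z_N(s) = e^{−λ r_N(s)}, Z_n(s) = Σ_a ρ_n(s)(a)^α e^{−λ r_n(s,a)} Z_{n+1}(f_n(s,a)). Then for every state s and every action sequence (a_n, …, a_{N−1}), with s_n = s and s_{k+1} = f_k(s_k, a_k), the telescoping identity Π_{k=n}^{N−1} π'_k(s_k)(a_k) = (Π_{k=n}^{N−1} ρ_k(s_k)(a_k)) · exp(−R_n) / Z_n(s) holds, where R_n = λ r_N(s_N) + Σ_{k=n}^{N−1} [λ r_k(s_k,a_k) + (1−α)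 log ρ_k(s_k)(a_k)]. -/
open Finset

/-- The final claim of the paper's Corollary 1: the posterior path distribution is the
exponentially reweighted prior path distribution. For every state `s` and action sequence
`(a_n, …, a_{N-1})`, `Π π'_k(s_k)(a_k) = (Π ρ_k(s_k)(a_k)) · exp(-R_n) / Z_n(s)`, where `R_n`
accumulates `λ r_k(s_k,a_k) + (1-α) log ρ_k(s_k)(a_k)` plus the terminal cost `λ r_N(s_N)`. -/
theorem posterior_path_distribution_telescopes
    {S : Type*} {A : Type*} [Fintype A] [Nonempty A]
    (N : ℕ) (hN : 1 ≤ N)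
    (f : ℕ → S → A → S) (r : ℕ → S → A → ℝ) (rT : S → ℝ)
    (lam α : ℝ) (hlam : 0 < lam) (hα₀ : 0 < α) (hα₁ : α < 1)
    (ρ : ℕ → S → A → ℝ) (hρpos : ∀ n s a, 0 < ρ n s a) (hρsum : ∀ n s, ∑ a, ρ n s a = 1)
    (Z : ℕ → S → ℝ)
    (hZN : ∀ s, Z N s = Real.exp (-(lam * rT s)))
    (hZ : ∀ n, n < N → ∀ s, Z n s =
      ∑ a, ρ n s a ^ α * Real.exp (-(lam * r n s a)) * Z (n + 1) (f n s a))
    (π' : ℕ → S → A → ℝ)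
    (hπ' : ∀ n s a, π' n s a =
      ρ n s a * Real.exp (-(lam * r n s a + (1 - α) * Real.log (ρ n s a)))
        * Z (n + 1) (f n s a) / Z n s) :
    ∀ n, n ≤ N → ∀ s, ∀ as : Fin (N - n) → A,
      pathProb π' f n s (List.ofFn as) =
        pathProb ρ f n s (List.ofFn as) *
          Real.exp (-(totalCost f
            (fun k t a => lam * r k t a + (1 - α) * Real.log (ρ k t a))
            (fun t => lam * rT t) n s (List.ofFn as))) / Z n s := by
  have hpos : ∀ m n, n + m = N → ∀ s, 0 < Z n s := by
    intro m
    induction m with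
    | zero =>
      intro n h s
      have h' : n = N := by omega
      subst h'
      rw [hZN]
      exact Real.exp_pos _
    | succ m ih =>
      intro n h s
      rw [hZ n (by omega) s]
      refine Finset.sum_pos (fun a _ => ?_) Finset.univ_nonempty
      exact mul_pos (mul_pos (Real.rpow_pos_of_pos (hρpos n s a) α) (Real.exp_pos _))
        (ih (n + 1) (by omega) _)
  have key : ∀ l : List A, ∀ n, n + l.length = N → ∀ s,
      pathProb π' f n s l = pathProb ρ f n s l *
          Real.exp (-(totalCost f
            (fun k t a => lam * r k t a + (1 - α) * Real.log (ρ k t a))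
            (fun t => lam * rT t) n s l)) / Z n s := by
    intro l
    induction l with
    | nil =>
      intro n h s
      have h' : n = N := by simpa using h
      subst h'
      simp only [pathProb, totalCost]
      rw [hZN, one_mul, div_self (Real.exp_pos _).ne']
    | cons a l ih =>
      intro n h s
      have h' : n + 1 + l.length = N := by
        rw [List.length_cons] at h
        omega
      have z1 := (hpos _ _ h' (f n s a)).ne'
      have z0 := (hpos _ _ h s).ne'
      simp only [pathProb, totalCost]
      rw [ih (n + 1) h' (f n s a), hπ', neg_add (lam * r n s a + _) (totalCost _ _ _ _ _ _),
        Real.exp_add]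
      field_simp
  intro n hn s as
  exact key _ n (by rw [List.length_ofFn]; omega) s
end
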